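/- Let M = ℝ² with coordinates (x¹, x²) and the C^∞-bilinear multiplication on vector fields determined by ∂/∂x¹ ∘ ∂/∂x^i = ∂/∂x^i (i = 1,2) and ∂/∂x² ∘ ∂/∂x² = 0. Then: (a) this multiplication, with identity e = ∂/∂x¹, defines an F-manifold structure on ℝ²; and (b) a vector field E = f₁ ∂/∂x¹ + f₂ ∂/∂x² is an eventual identity if and only if f₁ is nowhere vanishing and depends only on x¹ (∂f₁/∂x² = 0), with f₂ an arbitrary smooth function. -/

import Mathlib

/-! The F-manifold structure on `ℝ²` given in coordinates `(x¹, x²)` by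
`∂₁ ∘ ∂ᵢ = ∂ᵢ`, `∂₂ ∘ ∂₂ = 0` (Hertling's non-semi-simple example), and the
characterization of its eventual identities.  Vector fields on `ℝ²` are identified
with smooth maps `ℝ² → ℝ²`, the Lie bracket being `[X,Y] = DY·X − DX·Y`. -/

/-- Vector fields on `ℝ²`, identified with maps `ℝ² → ℝ²`. -/
abbrev VF2 := (ℝ × ℝ) → ℝ × ℝ

/-- The Lie bracket of vector fields on `ℝ²`: `[X,Y] = DY·X − DX·Y`. -/
noncomputable def bracket2 (X Y : VF2) : VF2 :=
  fun x => fderiv ℝ Y x (X x) - fderiv ℝ X x (Y x)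

/-- The Lie derivative `(L_X ∘)(Y,Z) := [X, Y∘Z] − [X,Y]∘Z − Y∘[X,Z]` of a
multiplication `∘ = mul` of vector fields on `ℝ²`, along the vector field `X`. -/
noncomputable def lieDerivOfMul2 (mul : VF2 → VF2 → VF2) (X Y Z : VF2) : VF2 :=
  bracket2 X (mul Y Z) - mul (bracket2 X Y) Z - mul Y (bracket2 X Z)

/-- `(mul, e)` is an F-manifold structure on `ℝ²`: a commutative, associative,
`C^∞`-bilinear multiplication on (smooth) vector fields with identity vector field `e`,
satisfying the Hertling–Manin condition. -/
def IsFManifoldMul2 (mul : VF2 → VF2 → VF2) (e : VF2) : Prop :=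
  (∀ X Y, ContDiff ℝ (⊤ : ℕ∞) X → ContDiff ℝ (⊤ : ℕ∞) Y → ContDiff ℝ (⊤ : ℕ∞) (mul X Y)) ∧
  (∀ X Y, mul X Y = mul Y X) ∧
  (∀ X Y Z, mul (mul X Y) Z = mul X (mul Y Z)) ∧
  (∀ X X' Y, mul (X + X') Y = mul X Y + mul X' Y) ∧
  (∀ (φ : ℝ × ℝ → ℝ) (X Y : VF2),
    mul (fun x => φ x • X x) Y = fun x => φ x • mul X Y x) ∧
  (∀ X, mul e X = X) ∧
  (∀ X Y Z W, ContDiff ℝ (⊤ : ℕ∞) X → ContDiff ℝ (⊤ : ℕ∞) Y → ContDiff ℝ (⊤ : ℕ∞) Z → ContDiff ℝ (⊤ : ℕ∞) W →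
    lieDerivOfMul2 mul (mul X Y) Z W =
      mul X (lieDerivOfMul2 mul Y Z W) + mul Y (lieDerivOfMul2 mul X Z W))

/-- A smooth vector field `Ev` on `ℝ²` is an eventual identity for `(ℝ², mul, e)` if it
is invertible (there is a smooth `inv` with `Ev ∘ inv = e`) and `X*Y := X∘Y∘inv`
defines a new F-manifold structure on `ℝ²`, with identity field `Ev`. -/
def IsEventualIdentity2 (mul : VF2 → VF2 → VF2) (e Ev : VF2) : Prop :=
  ∃ inv : VF2, ContDiff ℝ (⊤ : ℕ∞) inv ∧ mul Ev inv = e ∧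
    IsFManifoldMul2 (fun X Y => mul (mul X Y) inv) Ev

/-- The multiplication determined by `∂/∂x¹ ∘ ∂/∂xⁱ = ∂/∂xⁱ` (`i = 1,2`) and
`∂/∂x² ∘ ∂/∂x² = 0`, extended `C^∞`-bilinearly. -/
def hMul : VF2 → VF2 → VF2 :=
  fun X Y x => ((X x).1 * (Y x).1, (X x).1 * (Y x).2 + (X x).2 * (Y x).1)

/-- The identity vector field `e = ∂/∂x¹`. -/
def hE : VF2 := fun _ => (1, 0)

/-- The derivative of a vector field at a point, written in coordinates. -/
theorem jet2 (X : VF2) (x : ℝ × ℝ) :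
    ∃ a b c d : ℝ, ∀ v : ℝ × ℝ, fderiv ℝ X x v = (a * v.1 + b * v.2, c * v.1 + d * v.2) := by
  refine ⟨(fderiv ℝ X x (1, 0)).1, (fderiv ℝ X x (0, 1)).1, (fderiv ℝ X x (1, 0)).2,
    (fderiv ℝ X x (0, 1)).2, fun v => ?_⟩
  have hv : v = v.1 • ((1, 0) : ℝ × ℝ) + v.2 • ((0, 1) : ℝ × ℝ) := by
    ext <;> simp
  conv_lhs => rw [hv]
  rw [map_add, map_smul, map_smul]
  ext <;> simp [mul_comm]

theorem contDiff_hMul {X Y : VF2} (hX : ContDiff ℝ (⊤ : ℕ∞) X) (hY : ContDiff ℝ (⊤ : ℕ∞) Y) :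
    ContDiff ℝ (⊤ : ℕ∞) (hMul X Y) := by
  exact (hX.fst.mul hY.fst).prodMk ((hX.fst.mul hY.snd).add (hX.snd.mul hY.fst))

theorem fderiv_hMul {X Y : VF2} (hX : Differentiable ℝ X) (hY : Differentiable ℝ Y)
    (x v : ℝ × ℝ) :
    fderiv ℝ (hMul X Y) x v =
      ((X x).1 * (fderiv ℝ Y x v).1 + (fderiv ℝ X x v).1 * (Y x).1,
        ((X x).1 * (fderiv ℝ Y x v).2 + (fderiv ℝ X x v).1 * (Y x).2) +
        ((X x).2 * (fderiv ℝ Y x v).1 + (fderiv ℝ X x v).2 * (Y x).1)) := by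
  have h1 := (hX x).hasFDerivAt.fst
  have h2 := (hX x).hasFDerivAt.snd
  have k1 := (hY x).hasFDerivAt.fst
  have k2 := (hY x).hasFDerivAt.snd
  have h := (h1.mul k1).prodMk ((h1.mul k2).add (h2.mul k1))
  have h' : fderiv ℝ (hMul X Y) x = _ := h.fderiv
  rw [h']
  ext <;> simp <;> ring

theorem hMul_apply (X Y : VF2) (x : ℝ × ℝ) :
    hMul X Y x = ((X x).1 * (Y x).1, (X x).1 * (Y x).2 + (X x).2 * (Y x).1) := rfl

theorem isF_of_inv (E g : VF2) (hg : ContDiff ℝ (⊤ : ℕ∞) g) (hEg : hMul E g = hE)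
    (h2 : ∀ x, (fderiv ℝ g x (0, 1)).1 = 0) :
    IsFManifoldMul2 (fun X Y => hMul (hMul X Y) g) E := by
  refine ⟨fun X Y hX hY => contDiff_hMul (contDiff_hMul hX hY) hg, ?_, ?_, ?_, ?_, ?_, ?_⟩
  · intro X Y; funext x; ext <;> simp only [hMul_apply] <;> ring
  · intro X Y Z; funext x; ext <;> simp only [hMul_apply] <;> ring
  · intro X Y Z; funext x; ext <;> simp [hMul_apply] <;> ring
  · intro φ X Y; funext x; ext <;> simp [hMul_apply] <;> ring
  · intro X
    funext x
    have h := congrFun hEg x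
    simp only [hMul_apply, hE, Prod.mk.injEq] at h
    obtain ⟨ha, hb⟩ := h
    ext <;> simp only [hMul_apply]
    · linear_combination (X x).1 * ha
    · linear_combination (X x).2 * ha + (X x).1 * hb
  · intro X Y Z W hX hY hZ hW
    funext x
    have top : ((⊤ : ℕ∞) : WithTop ℕ∞) ≠ 0 := by simp
    have dm : ∀ {U V : VF2}, Differentiable ℝ U → Differentiable ℝ V →
        Differentiable ℝ (hMul U V) := by
      intro U V hU hV
      exact (hU.fst.mul hV.fst).prodMk ((hU.fst.mul hV.snd).add (hU.snd.mul hV.fst))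
    have dX := hX.differentiable top
    have dY := hY.differentiable top
    have dZ := hZ.differentiable top
    have dW := hW.differentiable top
    have dg := hg.differentiable top
    have eXY := fderiv_hMul (dm dX dY) dg x
    have eZW := fderiv_hMul (dm dZ dW) dg x
    simp only [fderiv_hMul dX dY] at eXY
    simp only [fderiv_hMul dZ dW] at eZW
    obtain ⟨a1, b1, c1, d1, jX⟩ := jet2 X x
    obtain ⟨a2, b2, c2, d2, jY⟩ := jet2 Y x
    obtain ⟨a3, b3, c3, d3, jZ⟩ := jet2 Z x
    obtain ⟨a4, b4, c4, d4, jW⟩ := jet2 W x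
    obtain ⟨a5, b5, c5, d5, jg⟩ := jet2 g x
    have hb5 : b5 = 0 := by simpa [jg] using h2 x
    subst hb5
    ext <;> simp only [lieDerivOfMul2, bracket2, Pi.sub_apply, Pi.add_apply, hMul_apply, eXY, eZW,
      jX, jY, jZ, jW, jg, Prod.fst_sub, Prod.snd_sub, Prod.fst_add, Prod.snd_add] <;> ring

theorem hMul_hE (X : VF2) : hMul X hE = X := by
  funext x; ext <;> simp [hMul_apply, hE]

/-- (a) The multiplication `∂/∂x¹ ∘ ∂/∂xⁱ = ∂/∂xⁱ`,
`∂/∂x² ∘ ∂/∂x² = 0` with identity `e = ∂/∂x¹` defines an F-manifold structure on `ℝ²`;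
and (b) a vector field `E = f₁ ∂/∂x¹ + f₂ ∂/∂x²` (with `f₁, f₂` smooth) is an eventual
identity if and only if `f₁` is nowhere vanishing and depends only on `x¹`
(`∂f₁/∂x² = 0`), `f₂` being an arbitrary smooth function. -/
theorem hertling_example_eventual_identities
    (f₁ f₂ : ℝ × ℝ → ℝ) (hf₁ : ContDiff ℝ (⊤ : ℕ∞) f₁) (hf₂ : ContDiff ℝ (⊤ : ℕ∞) f₂) :
    IsFManifoldMul2 hMul hE ∧
      (IsEventualIdentity2 hMul hE (fun x => (f₁ x, f₂ x)) ↔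
        ((∀ x, f₁ x ≠ 0) ∧ ∀ x, fderiv ℝ f₁ x (0, 1) = 0)) := by
  constructor
  · have h := isF_of_inv hE hE contDiff_const (hMul_hE hE) (by
      intro x
      have : fderiv ℝ hE x = 0 := by unfold hE; simp
      simp [this])
    simpa only [hMul_hE] using h
  have top : ((⊤ : ℕ∞) : WithTop ℕ∞) ≠ 0 := by simp
  have d1 := hf₁.differentiable top
  constructor
  · rintro ⟨g, hg, hEg, -, -, -, -, -, -, hHM⟩
    have dg := hg.differentiable top
    have h1 : ∀ x, f₁ x * (g x).1 = 1 := by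
      intro x
      have := congrFun hEg x
      simp only [hMul_apply, hE, Prod.mk.injEq] at this
      exact this.1
    have hne : ∀ x, f₁ x ≠ 0 := fun x h => by simpa [h] using h1 x
    refine ⟨hne, fun x => ?_⟩
    have key := congrFun (hHM (fun _ => (0, 1)) (fun _ => (0, 1)) (fun _ => (1, 0))
      (fun _ => (1, 0)) contDiff_const contDiff_const contDiff_const contDiff_const) x
    have e0 : hMul (hMul (fun _ => (0, 1)) (fun _ => (0, 1))) g = fun _ => (0, 0) := by
      funext y; simp [hMul_apply]
    have e1 : hMul (hMul (fun _ => (1, 0)) (fun _ => (1, 0))) g = g := by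
      funext y; simp [hMul_apply]
    have key2 := congrArg Prod.snd key
    simp only [lieDerivOfMul2, e0, e1] at key2
    have z : fderiv ℝ g x (0, 0) = 0 := map_zero _
    simp [bracket2, hMul_apply, z] at key2
    have hg1 : (g x).1 ≠ 0 := fun h => by simpa [h] using h1 x
    have hd : (fderiv ℝ g x (0, 1)).1 = 0 := by
      have h0 : (fderiv ℝ g x (0, 1)).1 * (g x).1 = 0 := by linarith
      exact (mul_eq_zero.mp h0).resolve_right hg1
    have hm := ((d1 x).hasFDerivAt.mul (dg x).hasFDerivAt.fst).fderiv
    have hc : (f₁ * fun y => (g y).1) = fun _ => (1 : ℝ) := funext h1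
    rw [hc] at hm
    have := congrArg (fun L => L ((0, 1) : ℝ × ℝ)) hm
    simpa [hd, hg1] using this
  · rintro ⟨hne, h2⟩
    have hEg : hMul (fun x => (f₁ x, f₂ x)) (fun x => ((f₁ x)⁻¹, -f₂ x * ((f₁ x)⁻¹ * (f₁ x)⁻¹)))
        = hE := by
      funext x
      have := hne x
      simp only [hMul_apply, hE, Prod.mk.injEq]
      constructor <;> field_simp
      ring
    have hi : ContDiff ℝ (⊤ : ℕ∞) (fun x => (f₁ x)⁻¹) := hf₁.inv hne
    have hg : ContDiff ℝ (⊤ : ℕ∞)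
        (fun x => ((f₁ x)⁻¹, -f₂ x * ((f₁ x)⁻¹ * (f₁ x)⁻¹))) := by fun_prop
    refine ⟨_, hg, hEg, isF_of_inv _ _ hg hEg fun x => ?_⟩
    have hm := ((d1 x).hasFDerivAt.mul ((hg.differentiable top) x).hasFDerivAt.fst).fderiv
    have hc : (f₁ * fun y => (f₁ y)⁻¹) = fun _ => (1 : ℝ) :=
      funext fun y => mul_inv_cancel₀ (hne y)
    rw [hc] at hm
    have := congrArg (fun L => L ((0, 1) : ℝ × ℝ)) hm
    simpa [h2, hne] using this
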